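/- Let H ⊂ ℝⁿ be a Hanner polytope. Then in an arbitrarily small neighborhood of any point (q,p) ∈ ∂(H × H°) there passes a closed classical billiard trajectory of the minimal length (length 4) in the configuration H × H°; i.e., the union of all minimal-length classical billiard trajectories (viewed as subsets of phase space ∂(H × H°)) is dense in ∂(H × H°). -/

import Mathlib

open MeasureTheory
open scoped Pointwise

namespace Billiard

/-- The canonical pairing `⟨p, q⟩ = ∑ i, p i * q i` on `ℝⁿ`. -/
noncomputable def pairing {n : ℕ} (p q : Fin n → ℝ) : ℝ := ∑ i, p i * q i

/-- The polar set `H° = {p : ⟨p, q⟩ ≤ 1 for all q ∈ H}`. -/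
def polarSet {n : ℕ} (H : Set (Fin n → ℝ)) : Set (Fin n → ℝ) :=
  {p | ∀ q ∈ H, pairing p q ≤ 1}

/-- The support function of `T`, i.e. the norm `‖v‖_{T} = max_{p ∈ T} ⟨p, v⟩`. -/
noncomputable def suppFn {n : ℕ} (T : Set (Fin n → ℝ)) (v : Fin n → ℝ) : ℝ :=
  sSup ((fun p => pairing p v) '' T)

/-- Projection of `ℝ^{k+l}` onto the first `k` coordinates. -/
def splitL {k l : ℕ} (x : Fin (k + l) → ℝ) : Fin k → ℝ := fun i => x (Fin.castAdd l i)

/-- Projection of `ℝ^{k+l}` onto the last `l` coordinates. -/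
def splitR {k l : ℕ} (x : Fin (k + l) → ℝ) : Fin l → ℝ := fun j => x (Fin.natAdd k j)

/-- `K ⊕_∞ L = K × L ⊂ ℝ^{k+l}`. -/
def sumInfty {k l : ℕ} (K : Set (Fin k → ℝ)) (L : Set (Fin l → ℝ)) :
    Set (Fin (k + l) → ℝ) :=
  {x | splitL x ∈ K ∧ splitR x ∈ L}

/-- `K ⊕₁ L = conv((K × {0}) ∪ ({0} × L)) ⊂ ℝ^{k+l}`. -/
def sumOne {k l : ℕ} (K : Set (Fin k → ℝ)) (L : Set (Fin l → ℝ)) :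
    Set (Fin (k + l) → ℝ) :=
  convexHull ℝ ({x | splitL x ∈ K ∧ splitR x = 0} ∪ {x | splitL x = 0 ∧ splitR x ∈ L})

/-- Hanner polytopes, defined inductively: the segment `[-1,1] ⊂ ℝ` is a Hanner polytope,
and `K ⊕_∞ L`, `K ⊕₁ L` are Hanner polytopes whenever `K`, `L` are. -/
inductive IsHanner : ∀ n : ℕ, Set (Fin n → ℝ) → Prop
  | segment : IsHanner 1 {x | |x 0| ≤ 1}
  | inftySum {k l : ℕ} {K : Set (Fin k → ℝ)} {L : Set (Fin l → ℝ)} :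
      IsHanner k K → IsHanner l L → IsHanner (k + l) (sumInfty K L)
  | oneSum {k l : ℕ} {K : Set (Fin k → ℝ)} {L : Set (Fin l → ℝ)} :
      IsHanner k K → IsHanner l L → IsHanner (k + l) (sumOne K L)

/-- `u` is the outer normal of the facet of `H` containing `q`, normalized to lie in `∂H°`:
`u ∈ H°`, `⟨u, q⟩ = 1`, and `u` is the unique such vector. The uniqueness encodes that `q`
lies in the relative interior of a facet of the polytope `H`. -/
def IsUniqueNormal {n : ℕ} (H : Set (Fin n → ℝ)) (q u : Fin n → ℝ) : Prop :=
  u ∈ polarSet H ∧ pairing u q = 1 ∧ ∀ v ∈ polarSet H, pairing v q = 1 → v = u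

/-- A classical closed billiard trajectory in the configuration `H × T` (with `T = H°`):
closed `m`-periodic sequences of coordinates `q i ∈ ∂H` and momenta `p i ∈ ∂T`, each in
the relative interior of a facet (encoded by uniqueness of the normalized outer normal),
satisfying the reflection rule `p (i+1) − p i = −λ i • n_H(q i)` with `λ i > 0` and the
motion rule `q (i+1) − q i = μ i • n_T(p (i+1))` with `μ i > 0`. -/
structure ClassicalTraj (n : ℕ) (H T : Set (Fin n → ℝ)) where
  m : ℕ
  m_pos : 0 < m
  q : ℕ → Fin n → ℝ
  p : ℕ → Fin n → ℝ
  nq : ℕ → Fin n → ℝ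
  np : ℕ → Fin n → ℝ
  lam : ℕ → ℝ
  mu : ℕ → ℝ
  q_mem : ∀ i, q i ∈ frontier H
  p_mem : ∀ i, p i ∈ frontier T
  q_periodic : ∀ i, q (i + m) = q i
  p_periodic : ∀ i, p (i + m) = p i
  nq_spec : ∀ i, IsUniqueNormal H (q i) (nq i)
  np_spec : ∀ i, IsUniqueNormal T (p i) (np i)
  lam_pos : ∀ i, 0 < lam i
  mu_pos : ∀ i, 0 < mu i
  reflection : ∀ i, p (i + 1) - p i = (-(lam i)) • nq i
  motion : ∀ i, q (i + 1) - q i = mu i • np (i + 1)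

/-- A trajectory is simple if it does not traverse the same closed route more than once,
i.e. it has no period smaller than `m`. -/
def ClassicalTraj.IsSimple {n : ℕ} {H T : Set (Fin n → ℝ)}
    (τ : ClassicalTraj n H T) : Prop :=
  ∀ d : ℕ, 0 < d → d < τ.m → ¬(∀ i, τ.q (i + d) = τ.q i ∧ τ.p (i + d) = τ.p i)

/-- The length of the trajectory, measured in the norm `‖·‖_T` with `T = H°`. -/
noncomputable def ClassicalTraj.length {n : ℕ} {H T : Set (Fin n → ℝ)}
    (τ : ClassicalTraj n H T) : ℝ :=
  ∑ i ∈ Finset.range τ.m, suppFn T (τ.q (i + 1) - τ.q i)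

/-- The trace of a trajectory in phase space `∂H × ∂T`: the union of the segments swept by
the coordinate while the momentum is constant, and by the momentum while the coordinate is
constant. -/
noncomputable def ClassicalTraj.trace {n : ℕ} {H T : Set (Fin n → ℝ)}
    (τ : ClassicalTraj n H T) : Set ((Fin n → ℝ) × (Fin n → ℝ)) :=
  ⋃ i ∈ Finset.range τ.m,
    ((fun x => (x, τ.p (i + 1))) '' segment ℝ (τ.q i) (τ.q (i + 1)) ∪
      (fun y => (τ.q i, y)) '' segment ℝ (τ.p i) (τ.p (i + 1)))

/-- The coordinate polygonal line of a trajectory, as a subset of `∂H`. -/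
noncomputable def ClassicalTraj.coordTrace {n : ℕ} {H T : Set (Fin n → ℝ)}
    (τ : ClassicalTraj n H T) : Set (Fin n → ℝ) :=
  ⋃ i ∈ Finset.range τ.m, segment ℝ (τ.q i) (τ.q (i + 1))

/-- The momentum polygonal line of a trajectory, as a subset of `∂T`. -/
noncomputable def ClassicalTraj.momTrace {n : ℕ} {H T : Set (Fin n → ℝ)}
    (τ : ClassicalTraj n H T) : Set (Fin n → ℝ) :=
  ⋃ i ∈ Finset.range τ.m, segment ℝ (τ.p i) (τ.p (i + 1))

/-!
A Hanner polytope and its polar are the unit balls of mutually dual norms, built from the absolute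
value by taking in each step the maximum of the norms on one side and their sum on the other. Run
two trajectories of length `4` simultaneously at unit speed in the two summands of such a pair,
weighting their momenta by `s` and `1 - s`. This is a billiard trajectory for the maximum and the
sum norm as long as the two never bounce at the same time, because at a bounce of one of them the
other lies in the open unit ball, and it has length `4` because the length is the elapsed time.
Simultaneous bounces are avoided by an arbitrarily small shift in time of one of the two, so density
passes to the sum. The other kind of sum follows by exchanging coordinates and momenta; the time
scale of the exchanged trajectory is `t - ⟨p, q⟩`, whose period is again `4`.
-/

open Set Filter Topology

section Norms

lemma seminorm_smul_of_nonneg {E : Type*} [AddCommGroup E] [Module ℝ E] (N : Seminorm ℝ E)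
    {s : ℝ} (hs : 0 ≤ s) (x : E) : N (s • x) = s * N x := by
  rw [map_smul_eq_mul, Real.norm_eq_abs, abs_of_nonneg hs]

lemma seminorm_continuous {E : Type*} [NormedAddCommGroup E] [NormedSpace ℝ E]
    [FiniteDimensional ℝ E] (N : Seminorm ℝ E) : Continuous N :=
  continuousOn_univ.1 (N.convexOn.continuousOn isOpen_univ)

lemma mem_frontier_unitBall_iff {E : Type*} [NormedAddCommGroup E] [NormedSpace ℝ E]
    [FiniteDimensional ℝ E] (N : Seminorm ℝ E) {q : E} :
    q ∈ frontier {q | N q ≤ 1} ↔ N q = 1 := by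
  refine ⟨fun hq => frontier_le_subset_eq (seminorm_continuous N) continuous_const hq,
    fun hq => ?_⟩
  rw [frontier_eq_closure_inter_closure]
  refine ⟨subset_closure hq.le, ?_⟩
  have hone : (1 : ℝ) ∈ closure (Ioi 1) := by simp
  have houtside : MapsTo (fun c : ℝ => c • q) (Ioi 1) {q | N q ≤ 1}ᶜ := fun c hc => by
    have hc : 1 < c := hc
    simpa [seminorm_smul_of_nonneg N (zero_le_one.trans hc.le), hq] using hc
  simpa using map_mem_closure (f := fun c : ℝ => c • q) (by fun_prop) hone houtside

variable {ι : Type*} [Fintype ι]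

/-- The seminorms `N` and `M` on `ℝ^ι` are mutually dual norms for the pairing `⬝ᵥ`, on a space
of positive dimension (which the last field expresses). -/
structure DualNorms (N M : Seminorm ℝ (ι → ℝ)) : Prop where
  dotProduct_le : ∀ p q, p ⬝ᵥ q ≤ M p * N q
  norming_left : ∀ q, ∃ p, M p ≤ 1 ∧ p ⬝ᵥ q = N q
  norming_right : ∀ p, ∃ q, N q ≤ 1 ∧ p ⬝ᵥ q = M p
  exists_unit : ∃ q, N q = 1

namespace DualNorms

lemma symm {N M : Seminorm ℝ (ι → ℝ)} (h : DualNorms N M) : DualNorms M N where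
  dotProduct_le p q := by
    rw [dotProduct_comm, mul_comm]
    exact h.dotProduct_le q p
  norming_left q := by simpa only [dotProduct_comm] using h.norming_right q
  norming_right q := by simpa only [dotProduct_comm] using h.norming_left q
  exists_unit := by
    obtain ⟨q, hq⟩ := h.exists_unit
    obtain ⟨p, hp, hpq⟩ := h.norming_left q
    have hle := h.dotProduct_le p q
    rw [hpq, hq, mul_one] at hle
    exact ⟨p, le_antisymm hp hle⟩

lemma eq_zero {N M : Seminorm ℝ (ι → ℝ)} (h : DualNorms N M) {q : ι → ℝ} (hq : N q = 0) :
    q = 0 := by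
  have hnonneg : 0 ≤ q ⬝ᵥ q := Finset.sum_nonneg fun i _ => mul_self_nonneg (q i)
  have hnonpos : q ⬝ᵥ q ≤ 0 := by simpa [hq] using h.dotProduct_le q q
  exact dotProduct_self_eq_zero.1 (le_antisymm hnonpos hnonneg)

lemma exists_smul_eq {N M : Seminorm ℝ (ι → ℝ)} (h : DualNorms N M) {q : ι → ℝ} {s : ℝ}
    (hq : N q ≤ s) : ∃ v, N v ≤ 1 ∧ q = s • v := by
  rcases (apply_nonneg N q).trans hq |>.eq_or_lt with rfl | hs
  · exact ⟨0, by simp, by rw [h.eq_zero (le_antisymm hq (apply_nonneg N q)), smul_zero]⟩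
  · refine ⟨s⁻¹ • q, ?_, (smul_inv_smul₀ hs.ne' q).symm⟩
    rw [seminorm_smul_of_nonneg N (inv_nonneg.2 hs.le)]
    exact inv_mul_le_one_of_le₀ hq hs.le

lemma exists_unit_smul_eq {N M : Seminorm ℝ (ι → ℝ)} (h : DualNorms N M) (q : ι → ℝ) :
    ∃ v, N v = 1 ∧ q = N q • v := by
  rcases eq_or_ne (N q) 0 with hq | hq
  · obtain ⟨v, hv⟩ := h.exists_unit
    exact ⟨v, hv, by rw [hq, zero_smul, h.eq_zero hq]⟩
  · refine ⟨(N q)⁻¹ • q, ?_, (smul_inv_smul₀ hq q).symm⟩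
    rw [seminorm_smul_of_nonneg N (inv_nonneg.2 (apply_nonneg N q)), inv_mul_cancel₀ hq]

variable {n : ℕ} {N M : Seminorm ℝ (Fin n → ℝ)}

lemma polarSet_unitBall (h : DualNorms N M) : polarSet {q | N q ≤ 1} = {p | M p ≤ 1} := by
  ext p
  constructor
  · intro hp
    obtain ⟨q, hq, hpq⟩ := h.norming_right p
    exact hpq.symm.le.trans (hp q hq)
  · exact fun hp q hq => (h.dotProduct_le p q).trans (mul_le_one₀ hp (apply_nonneg N q) hq)

lemma suppFn_unitBall (h : DualNorms N M) (v : Fin n → ℝ) : suppFn {p | M p ≤ 1} v = N v := by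
  refine IsGreatest.csSup_eq ⟨h.norming_left v, ?_⟩
  rintro _ ⟨p, hp, rfl⟩
  exact (h.dotProduct_le p v).trans (mul_le_of_le_one_left (apply_nonneg N v) hp)

end DualNorms

/-- `u` is the only vector of the unit ball of `M` whose pairing with `q` is `1`; for dual norms
`N`, `M` and `N q = 1` it is the normalized outer normal at `q` of the unit ball of `N`. -/
structure IsUniqueNorming (M : Seminorm ℝ (ι → ℝ)) (q u : ι → ℝ) : Prop where
  norm_le : M u ≤ 1
  dotProduct_eq : u ⬝ᵥ q = 1
  eq_of_dotProduct_eq : ∀ v, M v ≤ 1 → v ⬝ᵥ q = 1 → v = u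

namespace IsUniqueNorming

lemma neg {M : Seminorm ℝ (ι → ℝ)} {q u : ι → ℝ} (h : IsUniqueNorming M q u) :
    IsUniqueNorming M (-q) (-u) where
  norm_le := (map_neg_eq_map M u).trans_le h.norm_le
  dotProduct_eq := by rw [neg_dotProduct_neg, h.dotProduct_eq]
  eq_of_dotProduct_eq v hv hvq := neg_eq_iff_eq_neg.1 <|
    h.eq_of_dotProduct_eq (-v) (by rwa [map_neg_eq_map])
      (by rwa [neg_dotProduct, ← dotProduct_neg])

lemma norm_eq {N M : Seminorm ℝ (ι → ℝ)} (hNM : DualNorms N M) {q u : ι → ℝ}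
    (h : IsUniqueNorming M q u) (hq : N q ≤ 1) : M u = 1 := by
  refine le_antisymm h.norm_le ?_
  calc 1 = u ⬝ᵥ q := h.dotProduct_eq.symm
    _ ≤ M u * N q := hNM.dotProduct_le u q
    _ ≤ M u := mul_le_of_le_one_right (apply_nonneg M u) hq

lemma isUniqueNormal {n : ℕ} {N M : Seminorm ℝ (Fin n → ℝ)} (hNM : DualNorms N M)
    {q u : Fin n → ℝ} (h : IsUniqueNorming M q u) : IsUniqueNormal {q | N q ≤ 1} q u := by
  rw [IsUniqueNormal, hNM.polarSet_unitBall]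
  exact ⟨h.norm_le, h.dotProduct_eq, h.eq_of_dotProduct_eq⟩

end IsUniqueNorming

end Norms

lemma exists_orderIso_int_of_finite_inter_Icc {S : Set ℝ} (hne : S.Nonempty)
    (hfin : ∀ a b, (S ∩ Icc a b).Finite) (hbelow : ∀ t ∈ S, ∃ s ∈ S, s < t)
    (habove : ∀ t ∈ S, ∃ s ∈ S, t < s) :
    Nonempty (S ≃o ℤ) := by
  have : Nonempty S := hne.to_subtype
  have : NoMaxOrder S := ⟨fun t => let ⟨s, hs, hts⟩ := habove t t.2; ⟨⟨s, hs⟩, hts⟩⟩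
  have : NoMinOrder S := ⟨fun t => let ⟨s, hs, hts⟩ := hbelow t t.2; ⟨⟨s, hs⟩, hts⟩⟩
  let : LocallyFiniteOrder S := LocallyFiniteOrder.ofFiniteIcc fun a b =>
    ((hfin a b).preimage Subtype.val_injective.injOn).subset fun x hx => ⟨x.2, hx⟩
  let : SuccOrder S := LinearLocallyFiniteOrder.succOrder S
  let : PredOrder S := LinearLocallyFiniteOrder.predOrder S
  exact ⟨orderIsoIntOfLinearSuccPredArch⟩

lemma orderIso_int_apply (g : ℤ ≃o ℤ) (i : ℤ) : g i = g 0 + i := by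
  simpa using AddConstMapClass.map_add_int
    (⟨g, fun j => by simpa using g.map_succ j⟩ : AddConstMap ℤ ℤ 1 1) 0 i

/-- A discrete set of instants on the time line that is invariant under translation by `T`,
enumerated in increasing order by `ℤ`; each period contains `m` of them. -/
structure Clock (T : ℝ) where
  m : ℕ
  m_pos : 0 < m
  time : ℤ → ℝ
  strictMono : StrictMono time
  time_add : ∀ i, time (i + m) = time i + T

namespace Clock

variable {T : ℝ} (c : Clock T)

lemma period_pos (c : Clock T) : 0 < T := by
  have h := c.strictMono (lt_add_of_pos_right 0 (Int.natCast_pos.2 c.m_pos))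
  rwa [c.time_add, lt_add_iff_pos_right] at h

lemma time_add_zsmul (i k : ℤ) : c.time (i + k • (c.m : ℤ)) = c.time i + k • T :=
  AddConstMapClass.map_add_zsmul (⟨c.time, c.time_add⟩ : AddConstMap ℤ ℝ (c.m : ℤ) T) i k

lemma exists_lt_time (t : ℝ) : ∃ i, t < c.time i := by
  obtain ⟨k, hk, -⟩ := existsUnique_add_zsmul_mem_Ioc c.period_pos (c.time 0) t
  exact ⟨0 + k • (c.m : ℤ), by rw [c.time_add_zsmul]; exact hk.1⟩

lemma exists_time_lt (t : ℝ) : ∃ i, c.time i < t := by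
  obtain ⟨k, hk, -⟩ := existsUnique_add_zsmul_mem_Ico c.period_pos (c.time 0) (t - T)
  exact ⟨0 + k • (c.m : ℤ), by rw [c.time_add_zsmul]; linarith [hk.2]⟩

lemma exists_time_lt_le (t : ℝ) : ∃ i, c.time i < t ∧ t ≤ c.time (i + 1) := by
  obtain ⟨j, hj⟩ := c.exists_lt_time t
  obtain ⟨i, hi, hmax⟩ := Int.exists_greatest_of_bdd (P := fun i => c.time i < t)
    ⟨j, fun i hi => (c.strictMono.lt_iff_lt.1 (hi.trans hj)).le⟩ (c.exists_time_lt t)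
  exact ⟨i, hi, not_lt.1 fun h => (lt_add_one i).not_ge (hmax _ h)⟩

/-- The index of the last instant strictly before `t`. -/
noncomputable def idx (t : ℝ) : ℤ := (c.exists_time_lt_le t).choose

lemma time_idx_lt (t : ℝ) : c.time (c.idx t) < t := (c.exists_time_lt_le t).choose_spec.1

lemma le_time_idx_add_one (t : ℝ) : t ≤ c.time (c.idx t + 1) :=
  (c.exists_time_lt_le t).choose_spec.2

lemma mem_Ioo_time_idx {t : ℝ} (ht : t ∉ range c.time) :
    t ∈ Ioo (c.time (c.idx t)) (c.time (c.idx t + 1)) :=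
  ⟨c.time_idx_lt t, (c.le_time_idx_add_one t).lt_of_ne fun h => ht ⟨_, h.symm⟩⟩

lemma time_lt_iff_le_idx {i : ℤ} {t : ℝ} : c.time i < t ↔ i ≤ c.idx t where
  mp h := Int.lt_add_one_iff.1 (c.strictMono.lt_iff_lt.1 (h.trans_le (c.le_time_idx_add_one t)))
  mpr h := (c.strictMono.monotone h).trans_lt (c.time_idx_lt t)

lemma idx_eq_iff {i : ℤ} {t : ℝ} : c.idx t = i ↔ c.time i < t ∧ t ≤ c.time (i + 1) := by
  rw [← not_lt, c.time_lt_iff_le_idx, c.time_lt_iff_le_idx]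
  omega

lemma idx_time_add_one (i : ℤ) : c.idx (c.time (i + 1)) = i :=
  c.idx_eq_iff.2 ⟨c.strictMono (lt_add_one i), le_rfl⟩

lemma idx_add_period (t : ℝ) : c.idx (t + T) = c.idx t + c.m := by
  rw [c.idx_eq_iff, add_right_comm, c.time_add, c.time_add]
  exact ⟨by gcongr; exact c.time_idx_lt t, by gcongr; exact c.le_time_idx_add_one t⟩

lemma idx_eq_idx {s t : ℝ} (hst : s ≤ t) (h : Disjoint (range c.time) (Ico s t)) :
    c.idx s = c.idx t :=
  eq_of_forall_le_iff fun i => by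
    rw [← c.time_lt_iff_le_idx, ← c.time_lt_iff_le_idx]
    exact ⟨fun hi => hi.trans_le hst, fun hi => not_le.1 fun hs =>
      disjoint_left.1 h (mem_range_self i) ⟨hs, hi⟩⟩

lemma disjoint_range_Ioo (i : ℤ) : Disjoint (range c.time) (Ioo (c.time i) (c.time (i + 1))) := by
  rw [disjoint_left]
  rintro _ ⟨j, rfl⟩ ⟨hij, hji⟩
  have := c.strictMono.lt_iff_lt.1 hij
  have := c.strictMono.lt_iff_lt.1 hji
  omega

lemma time_idx_le {s t : ℝ} (h : Disjoint (range c.time) (Ioo s t)) : c.time (c.idx t) ≤ s :=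
  not_lt.1 fun hs => disjoint_left.1 h (mem_range_self _) ⟨hs, c.time_idx_lt t⟩

lemma finite_range_inter_Icc (a b : ℝ) : (range c.time ∩ Icc a b).Finite := by
  refine ((finite_Icc (c.idx a) (c.idx b + 1)).image c.time).subset ?_
  rintro _ ⟨⟨i, rfl⟩, ha, hb⟩
  exact ⟨i, ⟨c.strictMono.le_iff_le.1 ((c.time_idx_lt a).le.trans ha),
    c.strictMono.le_iff_le.1 (hb.trans (c.le_time_idx_add_one b))⟩, rfl⟩

lemma add_period_mem_range_iff {t : ℝ} : t + T ∈ range c.time ↔ t ∈ range c.time := by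
  constructor
  · rintro ⟨i, hi⟩
    have h := c.time_add (i - c.m)
    rw [sub_add_cancel, hi] at h
    exact ⟨i - c.m, add_right_cancel h.symm⟩
  · rintro ⟨i, rfl⟩
    exact ⟨i + c.m, c.time_add i⟩

lemma exists_range_time_eq (hT : 0 < T) {S : Set ℝ} (hne : S.Nonempty)
    (hfin : ∀ a b, (S ∩ Icc a b).Finite) (hadd : ∀ t, t + T ∈ S ↔ t ∈ S) :
    ∃ c : Clock T, range c.time = S := by
  have hbelow : ∀ t ∈ S, ∃ s ∈ S, s < t := fun t ht =>
    ⟨t - T, (hadd _).1 (by rwa [sub_add_cancel]), sub_lt_self t hT⟩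
  have habove : ∀ t ∈ S, ∃ s ∈ S, t < s := fun t ht =>
    ⟨t + T, (hadd t).2 ht, lt_add_of_pos_right t hT⟩
  obtain ⟨e⟩ := exists_orderIso_int_of_finite_inter_Icc hne hfin hbelow habove
  let translation : S ≃o S :=
    { toFun := fun t => ⟨t + T, (hadd t).2 t.2⟩
      invFun := fun t => ⟨t - T, (hadd _).1 (by rw [sub_add_cancel]; exact t.2)⟩
      left_inv := fun t => by simp
      right_inv := fun t => by simp
      map_rel_iff' := by simp }
  let g : ℤ ≃o ℤ := e.symm.trans (translation.trans e)
  have hg : ∀ i, e.symm (g i) = translation (e.symm i) := fun i => e.symm_apply_apply _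
  have hpos : 0 < g 0 := by
    rw [← e.symm.lt_iff_lt, hg]
    exact Subtype.coe_lt_coe.1 (lt_add_of_pos_right _ hT)
  refine ⟨⟨(g 0).toNat, by omega, fun i => e.symm i, e.symm.strictMono, fun i => ?_⟩, ?_⟩
  · rw [Int.toNat_of_nonneg hpos.le, add_comm, ← orderIso_int_apply, hg]
    rfl
  · rw [range_comp' Subtype.val e.symm, e.symm.range_eq, image_univ, Subtype.range_coe]

lemma exists_range_time_eq_union (c₁ c₂ : Clock T) :
    ∃ c : Clock T, range c.time = range c₁.time ∪ range c₂.time :=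
  exists_range_time_eq c₁.period_pos (range_nonempty _ |>.inl)
    (fun a b => by
      rw [union_inter_distrib_right]
      exact (c₁.finite_range_inter_Icc a b).union (c₂.finite_range_inter_Icc a b))
    fun t => by simp only [mem_union, add_period_mem_range_iff]

/-- The clock running `a` ahead. -/
def shift (a : ℝ) : Clock T where
  m := c.m
  m_pos := c.m_pos
  time i := c.time i - a
  strictMono _ _ h := sub_lt_sub_right (c.strictMono h) a
  time_add i := by rw [c.time_add, add_sub_right_comm]

lemma idx_shift (a t : ℝ) : (c.shift a).idx t = c.idx (t + a) :=
  (c.shift a).idx_eq_iff.2 ⟨sub_lt_iff_lt_add.2 (c.time_idx_lt _),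
    le_sub_iff_add_le.2 (c.le_time_idx_add_one _)⟩

end Clock

section Orbits

variable {ι : Type*} [Fintype ι]

/-- With constant momentum `p` on the dual unit sphere, the coordinate moves from `q` to `q'` with
the normal of the dual ball at `p` as velocity, in time `τ`, strictly inside the unit ball. -/
structure IsLeg (N M : Seminorm ℝ (ι → ℝ)) (p q q' : ι → ℝ) (τ : ℝ) : Prop where
  norm_eq : M p = 1
  exists_normal : ∃ v, IsUniqueNorming N p v ∧ q' = q + τ • v
  norm_lt : ∀ x ∈ openSegment ℝ q q', N x < 1

namespace IsLeg

variable {N M : Seminorm ℝ (ι → ℝ)} {p q q' : ι → ℝ} {τ : ℝ}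

lemma neg_momentum (h : IsLeg N M p q q' τ) : IsLeg N M (-p) q q' (-τ) where
  norm_eq := (map_neg_eq_map M p).trans h.norm_eq
  exists_normal := by
    obtain ⟨v, hv, hq⟩ := h.exists_normal
    exact ⟨-v, hv.neg, by rw [hq, neg_smul_neg]⟩
  norm_lt := h.norm_lt

lemma neg_endpoints (h : IsLeg N M p q q' τ) : IsLeg N M p (-q) (-q') (-τ) where
  norm_eq := h.norm_eq
  exists_normal := by
    obtain ⟨v, hv, hq⟩ := h.exists_normal
    exact ⟨v, hv, by rw [hq, neg_add, neg_smul]⟩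
  norm_lt := by
    rintro _ ⟨a, b, ha, hb, hab, rfl⟩
    rw [smul_neg, smul_neg, ← neg_add, map_neg_eq_map]
    exact h.norm_lt _ ⟨a, b, ha, hb, hab, rfl⟩

end IsLeg

/-- A closed billiard trajectory of length `4` between the unit balls of `N` and `M`, all of whose
open segments run in the interiors of the two balls. It is parametrized by the time shown by a
clock: bounce `i` happens at `q i` at the instant `time i`, changing the momentum from `p i` to
`p (i + 1)`, and the speed in the norm `N` is `1`. -/
structure Orbit (N M : Seminorm ℝ (ι → ℝ)) extends Clock 4 where
  q : ℤ → ι → ℝ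
  p : ℤ → ι → ℝ
  q_periodic : Function.Periodic q m
  p_periodic : Function.Periodic p m
  motion : ∀ i, IsLeg N M (p (i + 1)) (q i) (q (i + 1)) (time (i + 1) - time i)
  reflection : ∀ i, ∃ lam > 0, IsLeg M N (q i) (p i) (p (i + 1)) (-lam)

namespace Orbit

variable {N M : Seminorm ℝ (ι → ℝ)} (O : Orbit N M)

lemma norm_q (i : ℤ) : N (O.q i) = 1 := by
  obtain ⟨_, -, h⟩ := O.reflection i
  exact h.norm_eq

lemma norm_p (i : ℤ) : M (O.p i) = 1 := by
  simpa only [sub_add_cancel] using (O.motion (i - 1)).norm_eq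

lemma dotProduct_motion (i : ℤ) :
    O.p (i + 1) ⬝ᵥ O.q (i + 1) = O.p (i + 1) ⬝ᵥ O.q i + (O.time (i + 1) - O.time i) := by
  obtain ⟨v, hv, hq⟩ := (O.motion i).exists_normal
  rw [hq, dotProduct_add, dotProduct_smul, dotProduct_comm _ v, hv.dotProduct_eq, smul_eq_mul,
    mul_one]

/-- The time scale of the trajectory with coordinates and momenta exchanged: `⟨p, q⟩` grows like the
time between bounces and drops by the norm of the change of momentum at each bounce. -/
def dualTime (i : ℤ) : ℝ := O.time i - O.p (i + 1) ⬝ᵥ O.q i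

lemma dual_motion (i : ℤ) : O.dualTime i < O.dualTime (i + 1) ∧
    IsLeg M N (-O.q (i + 1)) (O.p (i + 1)) (O.p (i + 1 + 1))
      (O.dualTime (i + 1) - O.dualTime i) := by
  obtain ⟨lam, hlam, h⟩ := O.reflection (i + 1)
  obtain ⟨u, hu, hp⟩ := h.exists_normal
  have hdot : O.p (i + 1 + 1) ⬝ᵥ O.q (i + 1) = O.p (i + 1) ⬝ᵥ O.q (i + 1) - lam := by
    rw [hp, add_dotProduct, smul_dotProduct, hu.dotProduct_eq, smul_eq_mul, mul_one,
      ← sub_eq_add_neg]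
  have hlam_eq : O.dualTime (i + 1) - O.dualTime i = lam := by
    rw [dualTime, dualTime, hdot, O.dotProduct_motion]
    ring
  refine ⟨sub_pos.1 (hlam_eq ▸ hlam), ?_⟩
  simpa only [hlam_eq, neg_neg] using h.neg_momentum

/-- The trajectory with coordinates and momenta exchanged. The new momenta are `-q i` because the
rules of reflection and of motion have opposite signs. -/
def dual : Orbit M N where
  m := O.m
  m_pos := O.m_pos
  time := O.dualTime
  strictMono := strictMono_int_of_lt_succ fun i => (O.dual_motion i).1
  time_add i := by
    rw [dualTime, dualTime, add_right_comm, O.time_add, O.p_periodic, O.q_periodic,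
      add_sub_right_comm]
  q i := O.p (i + 1)
  p i := -O.q i
  q_periodic i := (congrArg O.p (add_right_comm i _ 1)).trans (O.p_periodic _)
  p_periodic i := congrArg Neg.neg (O.q_periodic i)
  motion i := (O.dual_motion i).2
  reflection i := ⟨_, sub_pos.2 (O.strictMono (lt_add_one i)), (O.motion i).neg_endpoints⟩

/-- The constant velocity between the instants `time i` and `time (i + 1)`. -/
noncomputable def velocity (i : ℤ) : ι → ℝ :=
  (O.time (i + 1) - O.time i)⁻¹ • (O.q (i + 1) - O.q i)

lemma q_add_one (i : ℤ) :
    O.q (i + 1) = O.q i + (O.time (i + 1) - O.time i) • O.velocity i := by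
  rw [velocity, smul_inv_smul₀ (sub_ne_zero.2 (O.strictMono (lt_add_one i)).ne'),
    add_sub_cancel]

lemma isUniqueNorming_velocity (i : ℤ) : IsUniqueNorming N (O.p (i + 1)) (O.velocity i) := by
  obtain ⟨v, hv, hq⟩ := (O.motion i).exists_normal
  have hne := sub_ne_zero.2 (O.strictMono (lt_add_one i)).ne'
  rwa [← smul_right_injective _ hne (add_left_cancel (hq.symm.trans (O.q_add_one i)))]

/-- The coordinate at the time `t`. -/
noncomputable def posAt (t : ℝ) : ι → ℝ :=
  O.q (O.idx t) + (t - O.time (O.idx t)) • O.velocity (O.idx t)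

/-- The momentum just before the time `t`. -/
noncomputable def momAt (t : ℝ) : ι → ℝ := O.p (O.idx t + 1)

lemma momAt_time (i : ℤ) : O.momAt (O.time i) = O.p i := by
  conv_lhs => rw [momAt, ← sub_add_cancel i 1, O.idx_time_add_one, sub_add_cancel]

lemma momAt_eq_p {i : ℤ} {t : ℝ} (hi : O.time i < t) (ht : t ≤ O.time (i + 1)) :
    O.momAt t = O.p (i + 1) := by
  rw [momAt, O.idx_eq_iff.2 ⟨hi, ht⟩]

lemma momAt_eq_momAt {s t : ℝ} (hst : s ≤ t) (h : Disjoint (range O.time) (Ico s t)) :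
    O.momAt s = O.momAt t := by
  rw [momAt, momAt, O.idx_eq_idx hst h]

lemma momAt_eq_p_of_disjoint {i : ℤ} {t : ℝ} (hi : O.time i < t)
    (h : Disjoint (range O.time) (Ioo (O.time i) t)) : O.momAt t = O.p (i + 1) :=
  O.momAt_eq_p hi <| not_lt.1 fun hlt =>
    disjoint_left.1 h (mem_range_self (i + 1)) ⟨O.strictMono (lt_add_one i), hlt⟩

lemma momAt_eq_momAt_of_notMem {s t : ℝ} (hst : s < t) (hs : s ∉ range O.time)
    (h : Disjoint (range O.time) (Ioo s t)) : O.momAt s = O.momAt t := by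
  refine O.momAt_eq_momAt hst.le ?_
  rw [← Ioo_insert_left hst]
  exact disjoint_insert_right.2 ⟨hs, h⟩

lemma norm_momAt (t : ℝ) : M (O.momAt t) = 1 := O.norm_p _

lemma momAt_periodic : Function.Periodic O.momAt 4 := fun t => by
  rw [momAt, O.idx_add_period, add_right_comm, O.p_periodic, momAt]

lemma posAt_time (i : ℤ) : O.posAt (O.time i) = O.q i := by
  obtain ⟨i, rfl⟩ : ∃ j, i = j + 1 := ⟨i - 1, by ring⟩
  rw [posAt, O.idx_time_add_one, ← O.q_add_one]

lemma posAt_eq {i : ℤ} {t : ℝ} (hi : O.time i ≤ t) (ht : t ≤ O.time (i + 1)) :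
    O.posAt t = O.q i + (t - O.time i) • O.velocity i := by
  rcases hi.eq_or_lt with rfl | hi
  · rw [O.posAt_time, sub_self, zero_smul, add_zero]
  · rw [posAt, O.idx_eq_iff.2 ⟨hi, ht⟩]

lemma posAt_periodic : Function.Periodic O.posAt 4 := fun t => by
  simp only [posAt, velocity, O.idx_add_period, O.time_add, O.q_periodic _,
    add_right_comm _ (O.m : ℤ) 1, add_sub_add_right_eq_sub]

lemma posAt_eq_posAt_add {s t : ℝ} (hst : s ≤ t) (h : Disjoint (range O.time) (Ioo s t)) :
    O.posAt t = O.posAt s + (t - s) • O.velocity (O.idx t) := by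
  have hs := O.time_idx_le h
  have ht := O.le_time_idx_add_one t
  rw [O.posAt_eq (hs.trans hst) ht, O.posAt_eq hs (hst.trans ht)]
  module

lemma posAt_convexCombination {s t a b : ℝ} (hst : s ≤ t)
    (h : Disjoint (range O.time) (Ioo s t)) (ha : 0 ≤ a) (hb : 0 ≤ b) (hab : a + b = 1) :
    O.posAt (a * s + b * t) = a • O.posAt s + b • O.posAt t := by
  have hs := O.time_idx_le h
  have ht := O.le_time_idx_add_one t
  obtain ⟨hsr, hrt⟩ := convex_Icc s t (left_mem_Icc.2 hst) (right_mem_Icc.2 hst) ha hb hab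
  rw [smul_eq_mul, smul_eq_mul] at hsr hrt
  rw [O.posAt_eq (hs.trans hsr) (hrt.trans ht), O.posAt_eq hs (hst.trans ht),
    O.posAt_eq (hs.trans hst) ht]
  obtain rfl := eq_sub_of_add_eq hab
  module

lemma norm_posAt_lt {t : ℝ} (ht : t ∉ range O.time) : N (O.posAt t) < 1 := by
  refine (O.motion (O.idx t)).norm_lt _ ?_
  have hmem : t ∈ openSegment ℝ (O.time (O.idx t)) (O.time (O.idx t + 1)) := by
    rw [openSegment_eq_Ioo (O.strictMono (lt_add_one _))]
    exact O.mem_Ioo_time_idx ht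
  obtain ⟨a, b, ha, hb, hab, h⟩ := hmem
  refine ⟨a, b, ha, hb, hab, ?_⟩
  rw [← O.posAt_time, ← O.posAt_time, ← O.posAt_convexCombination
    (O.strictMono (lt_add_one _)).le (O.disjoint_range_Ioo _) ha.le hb.le hab]
  exact congrArg O.posAt h

lemma isLeg_posAt {s t : ℝ} (hst : s < t) (h : Disjoint (range O.time) (Ioo s t)) :
    IsLeg N M (O.momAt t) (O.posAt s) (O.posAt t) (t - s) where
  norm_eq := O.norm_momAt t
  exists_normal := ⟨_, O.isUniqueNorming_velocity _, O.posAt_eq_posAt_add hst.le h⟩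
  norm_lt := by
    rintro _ ⟨a, b, ha, hb, hab, rfl⟩
    rw [← O.posAt_convexCombination hst.le h ha.le hb.le hab]
    have hmem : a * s + b * t ∈ Ioo s t := by
      rw [← openSegment_eq_Ioo hst]
      exact ⟨a, b, ha, hb, hab, rfl⟩
    exact O.norm_posAt_lt fun hr => disjoint_left.1 h hr hmem

/-- The same trajectory with its clock running `a` ahead. -/
def shift (a : ℝ) : Orbit N M where
  toClock := O.toClock.shift a
  q := O.q
  p := O.p
  q_periodic := O.q_periodic
  p_periodic := O.p_periodic
  motion i := by simpa only [Clock.shift, sub_sub_sub_cancel_right] using O.motion i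
  reflection := O.reflection

lemma momAt_shift (a t : ℝ) : (O.shift a).momAt t = O.momAt (t + a) :=
  congrArg (fun i => O.p (i + 1)) (O.toClock.idx_shift a t)

lemma posAt_shift (a t : ℝ) : (O.shift a).posAt t = O.posAt (t + a) := by
  have hidx : (O.shift a).idx t = O.idx (t + a) := O.toClock.idx_shift a t
  simp only [posAt, velocity, hidx]
  simp only [shift, Clock.shift, sub_sub_eq_add_sub, sub_add_cancel]

lemma eventually_posAt_momAt_eq {t : ℝ} (ht : t ∉ range O.time) :
    ∀ᶠ r in 𝓝 t,
      (O.posAt r, O.momAt r) = (O.posAt t + (r - t) • O.velocity (O.idx t), O.momAt t) := by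
  obtain ⟨hi, hi'⟩ := O.mem_Ioo_time_idx ht
  filter_upwards [Ioo_mem_nhds hi hi'] with r hr
  rw [posAt, momAt, O.idx_eq_iff.2 ⟨hr.1, hr.2.le⟩, posAt, momAt]
  congr 1
  module

/-- The part of the phase trajectory between the bounces `i` and `i + 1`, preceded by the change
of the momentum at the bounce `i`. -/
def stepTrace (i : ℤ) : Set ((ι → ℝ) × (ι → ℝ)) :=
  (fun x => (x, O.p (i + 1))) '' segment ℝ (O.q i) (O.q (i + 1)) ∪
    (fun y => (O.q i, y)) '' segment ℝ (O.p i) (O.p (i + 1))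

lemma stepTrace_periodic : Function.Periodic O.stepTrace O.m := fun i => by
  simp only [stepTrace, add_right_comm i (O.m : ℤ) 1, O.q_periodic _, O.p_periodic _]

lemma norm_q_sub (hNM : DualNorms N M) (i : ℤ) :
    N (O.q (i + 1) - O.q i) = O.time (i + 1) - O.time i := by
  have hle := sub_nonneg.2 (O.strictMono (lt_add_one i)).le
  rw [O.q_add_one, add_sub_cancel_left, seminorm_smul_of_nonneg N hle,
    (O.isUniqueNorming_velocity i).norm_eq hNM.symm (O.norm_p _).le, mul_one]

section Discrete

variable {n : ℕ} {N M : Seminorm ℝ (Fin n → ℝ)} (O : Orbit N M)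

lemma exists_classicalTraj (hNM : DualNorms N M) :
    ∃ τ : ClassicalTraj n {q | N q ≤ 1} {p | M p ≤ 1},
      τ.m = O.m ∧ (∀ i : ℕ, τ.q i = O.q i) ∧ ∀ i : ℕ, τ.p i = O.p i := by
  choose lam hlam hleg using O.reflection
  choose u hu hp using fun i => (hleg i).exists_normal
  exact ⟨
    { m := O.m
      m_pos := O.m_pos
      q := fun i => O.q i
      p := fun i => O.p i
      nq := fun i => u i
      np := fun i => O.velocity (i - 1)
      lam := fun i => lam i
      mu := fun i => O.time (i + 1) - O.time i
      q_mem := fun i => (mem_frontier_unitBall_iff N).2 (O.norm_q i)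
      p_mem := fun i => (mem_frontier_unitBall_iff M).2 (O.norm_p i)
      q_periodic := fun i => O.q_periodic i
      p_periodic := fun i => O.p_periodic i
      nq_spec := fun i => (hu i).isUniqueNormal hNM
      np_spec := fun i => by
        simpa only [sub_add_cancel] using
          (O.isUniqueNorming_velocity (i - 1)).isUniqueNormal hNM.symm
      lam_pos := fun i => hlam i
      mu_pos := fun i => sub_pos.2 (O.strictMono (lt_add_one _))
      reflection := fun i => sub_eq_iff_eq_add'.2 (hp i)
      motion := fun i => by
        push_cast
        rw [add_sub_cancel_right]
        exact sub_eq_iff_eq_add'.2 (O.q_add_one i) }, rfl, fun _ => rfl, fun _ => rfl⟩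

variable {τ : ClassicalTraj n {q | N q ≤ 1} {p | M p ≤ 1}}

lemma length_eq_four (hNM : DualNorms N M) (hm : τ.m = O.m) (hq : ∀ i : ℕ, τ.q i = O.q i) :
    τ.length = 4 := by
  have hstep (i : ℕ) : suppFn {p | M p ≤ 1} (τ.q (i + 1) - τ.q i) =
      O.time (i + 1 : ℕ) - O.time i := by
    rw [hNM.suppFn_unitBall, hq, hq]
    exact_mod_cast O.norm_q_sub hNM i
  calc τ.length = ∑ i ∈ Finset.range τ.m, (O.time (i + 1 : ℕ) - O.time i) :=
        Finset.sum_congr rfl fun i _ => hstep i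
    _ = O.time (0 + O.m) - O.time 0 := by
        rw [Finset.sum_range_sub fun i : ℕ => O.time i, hm, zero_add, Nat.cast_zero]
    _ = 4 := by rw [O.time_add, add_sub_cancel_left]

lemma stepTrace_subset_trace (hm : τ.m = O.m) (hq : ∀ i : ℕ, τ.q i = O.q i)
    (hp : ∀ i : ℕ, τ.p i = O.p i) (i : ℤ) : O.stepTrace i ⊆ τ.trace := by
  obtain ⟨j, ⟨hj, hjm⟩, hij⟩ :=
    O.stepTrace_periodic.exists_mem_Ico₀ (Int.natCast_pos.2 O.m_pos) i
  lift j to ℕ using hj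
  rw [hij]
  have htrace : τ.trace = ⋃ j ∈ Finset.range O.m, O.stepTrace j := by
    simp only [ClassicalTraj.trace, stepTrace, hm, hq, hp, Nat.cast_add, Nat.cast_one]
  rw [htrace]
  exact subset_biUnion_of_mem (u := fun j : ℕ => O.stepTrace j)
    (Finset.mem_coe.2 (Finset.mem_range.2 (Int.ofNat_lt.1 hjm)))

end Discrete

end Orbit

/-- The phase points passed by trajectories of length `4` strictly between two bounces. -/
def motionSet (N M : Seminorm ℝ (ι → ℝ)) : Set ((ι → ℝ) × (ι → ℝ)) :=
  {z | ∃ (O : Orbit N M) (i : ℤ),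
    z.1 ∈ openSegment ℝ (O.q i) (O.q (i + 1)) ∧ z.2 = O.p (i + 1)}

/-- The phase points swept by trajectories of length `4` while they bounce. -/
def reflectionSet (N M : Seminorm ℝ (ι → ℝ)) : Set ((ι → ℝ) × (ι → ℝ)) :=
  {z | ∃ (O : Orbit N M) (i : ℤ),
    z.1 = O.q i ∧ z.2 ∈ openSegment ℝ (O.p i) (O.p (i + 1))}

/-- Trajectories of length `4` pass arbitrarily close to every phase point of the boundary of the
product of the unit balls of `N` and `M`. -/
structure DenseOrbits (N M : Seminorm ℝ (ι → ℝ)) : Prop where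
  motion : ∀ q p, N q ≤ 1 → M p = 1 → (q, p) ∈ closure (motionSet N M)
  reflection : ∀ q p, N q = 1 → M p ≤ 1 → (q, p) ∈ closure (reflectionSet N M)

section Phase

variable {N M : Seminorm ℝ (ι → ℝ)}

lemma exists_classicalTraj_of_mem {n : ℕ} {N M : Seminorm ℝ (Fin n → ℝ)} (hNM : DualNorms N M)
    {z : (Fin n → ℝ) × (Fin n → ℝ)} (hz : z ∈ motionSet N M ∪ reflectionSet N M) :
    ∃ τ : ClassicalTraj n {q | N q ≤ 1} {p | M p ≤ 1}, τ.length = 4 ∧ z ∈ τ.trace := by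
  obtain ⟨z₁, z₂⟩ := z
  obtain ⟨O, i, hz⟩ : ∃ (O : Orbit N M) (i : ℤ), (z₁, z₂) ∈ O.stepTrace i := by
    rcases hz with ⟨O, i, h₁, h₂⟩ | ⟨O, i, h₁, h₂⟩
    · exact ⟨O, i, .inl ⟨z₁, openSegment_subset_segment _ _ _ h₁, congrArg (z₁, ·) h₂.symm⟩⟩
    · exact ⟨O, i, .inr ⟨z₂, openSegment_subset_segment _ _ _ h₂, congrArg (·, z₂) h₁.symm⟩⟩
  obtain ⟨τ, hm, hq, hp⟩ := O.exists_classicalTraj hNM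
  exact ⟨τ, O.length_eq_four hNM hm hq, O.stepTrace_subset_trace hm hq hp i hz⟩

lemma swap_mem_closure_reflectionSet {z : (ι → ℝ) × (ι → ℝ)} (hz : z ∈ closure (motionSet N M)) :
    (z.2, -z.1) ∈ closure (reflectionSet M N) := by
  refine map_mem_closure (f := fun z => (z.2, -z.1)) (by fun_prop) hz ?_
  rintro ⟨x, _⟩ ⟨O, i, ⟨a, b, ha, hb, hab, rfl⟩, rfl⟩
  exact ⟨O.dual, i, rfl, a, b, ha, hb, hab, by simp [Orbit.dual, add_comm]⟩

lemma swap_mem_closure_motionSet {z : (ι → ℝ) × (ι → ℝ)} (hz : z ∈ closure (reflectionSet N M)) :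
    (z.2, -z.1) ∈ closure (motionSet M N) := by
  refine map_mem_closure (f := fun z => (z.2, -z.1)) (by fun_prop) hz ?_
  rintro ⟨_, y⟩ ⟨O, i, rfl, hy⟩
  exact ⟨O.dual, i - 1, by simpa [Orbit.dual] using hy, by simp [Orbit.dual]⟩

lemma DenseOrbits.dual (h : DenseOrbits N M) : DenseOrbits M N where
  motion q p hq hp := by
    simpa using swap_mem_closure_motionSet
      (h.reflection (-p) q ((map_neg_eq_map N p).trans hp) hq)
  reflection q p hq hp := by
    simpa using swap_mem_closure_reflectionSet
      (h.motion (-p) q ((map_neg_eq_map N p).trans_le hp) hq)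

lemma exists_posAt_zero_of_mem_motionSet {z : (ι → ℝ) × (ι → ℝ)} (hz : z ∈ motionSet N M) :
    ∃ O : Orbit N M, 0 ∉ range O.time ∧ z = (O.posAt 0, O.momAt 0) := by
  obtain ⟨z₁, z₂⟩ := z
  obtain ⟨O, i, ⟨a, b, ha, hb, hab, rfl⟩, rfl⟩ := hz
  have hlt := O.strictMono (lt_add_one i)
  have hmem : a * O.time i + b * O.time (i + 1) ∈ Ioo (O.time i) (O.time (i + 1)) := by
    rw [← openSegment_eq_Ioo hlt]
    exact ⟨a, b, ha, hb, hab, rfl⟩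
  refine ⟨O.shift (a * O.time i + b * O.time (i + 1)), ?_, ?_⟩
  · rintro ⟨j, hj⟩
    exact disjoint_left.1 (O.disjoint_range_Ioo i) ⟨j, sub_eq_zero.1 hj⟩ hmem
  · rw [O.posAt_shift, O.momAt_shift, zero_add, O.momAt_eq_p hmem.1 hmem.2.le,
      O.posAt_convexCombination hlt.le (O.disjoint_range_Ioo i) ha.le hb.le hab,
      O.posAt_time, O.posAt_time]

lemma exists_time_eq_zero_of_mem_reflectionSet {z : (ι → ℝ) × (ι → ℝ)}
    (hz : z ∈ reflectionSet N M) : ∃ (O : Orbit N M) (i : ℤ),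
      O.time i = 0 ∧ z.1 = O.q i ∧ z.2 ∈ openSegment ℝ (O.p i) (O.p (i + 1)) := by
  obtain ⟨O, i, h⟩ := hz
  exact ⟨O.shift (O.time i), i, sub_self _, h⟩

-- All but countably many time shifts of a trajectory separate its bounces from those of `c`.
lemma mem_closure_posAt_zero_of_disjoint (c : Clock 4) {z : (ι → ℝ) × (ι → ℝ)}
    (hz : z ∈ motionSet N M) :
    z ∈ closure {w | ∃ O : Orbit N M, w = (O.posAt 0, O.momAt 0) ∧ 0 ∉ range O.time ∧
      Disjoint (range c.time) (range O.time)} := by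
  obtain ⟨O, hO, rfl⟩ := exists_posAt_zero_of_mem_motionSet hz
  let bad : Set ℝ := range O.time ∪ range fun ij : ℤ × ℤ => O.time ij.1 - c.time ij.2
  have hbad : bad.Countable := (countable_range _).union (countable_range _)
  obtain ⟨U, hU, hUo, hU₀⟩ := eventually_nhds_iff.1 (O.eventually_posAt_momAt_eq hO)
  have hclosure : (0 : ℝ) ∈ closure (U ∩ badᶜ) :=
    (hbad.dense_compl ℝ).open_subset_closure_inter hUo hU₀
  have hmaps : MapsTo (fun r => (O.posAt 0 + (r - 0) • O.velocity (O.idx 0), O.momAt 0))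
      (U ∩ badᶜ) {w | ∃ O : Orbit N M, w = (O.posAt 0, O.momAt 0) ∧ 0 ∉ range O.time ∧
        Disjoint (range c.time) (range O.time)} := by
    rintro r ⟨hrU, hr⟩
    refine ⟨O.shift r, ?_, ?_, ?_⟩
    · rw [O.posAt_shift, O.momAt_shift, zero_add, hU r hrU]
    · rintro ⟨i, hi⟩
      exact hr (.inl ⟨i, sub_eq_zero.1 hi⟩)
    · rw [disjoint_left]
      rintro _ ⟨j, rfl⟩ ⟨i, hi⟩
      exact hr (.inr ⟨(i, j), sub_eq_of_eq_add' (sub_eq_iff_eq_add.1 hi)⟩)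
  simpa using map_mem_closure (by fun_prop) hclosure hmaps

end Phase

end Orbits

section Sums

variable {ι₁ ι₂ ι : Type*}

/-- The phase point of a sum of two billiards whose momenta have the weights `s` and `1 - s`. -/
def phaseSum (J₁ : (ι₁ → ℝ) →ₗ[ℝ] (ι → ℝ)) (J₂ : (ι₂ → ℝ) →ₗ[ℝ] (ι → ℝ)) (s : ℝ)
    (z₁ : (ι₁ → ℝ) × (ι₁ → ℝ)) (z₂ : (ι₂ → ℝ) × (ι₂ → ℝ)) : (ι → ℝ) × (ι → ℝ) :=
  (J₁ z₁.1 + J₂ z₂.1, J₁ (s • z₁.2) + J₂ ((1 - s) • z₂.2))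

lemma continuous_phaseSum [Finite ι₁] [Finite ι₂] (J₁ : (ι₁ → ℝ) →ₗ[ℝ] (ι → ℝ))
    (J₂ : (ι₂ → ℝ) →ₗ[ℝ] (ι → ℝ)) :
    Continuous fun w : (ℝ × (ι₁ → ℝ) × (ι₁ → ℝ)) × (ι₂ → ℝ) × (ι₂ → ℝ) =>
      phaseSum J₁ J₂ w.1.1 w.1.2 w.2 := by
  have h₁ : Continuous J₁ := J₁.continuous_of_finiteDimensional
  have h₂ : Continuous J₂ := J₂.continuous_of_finiteDimensional
  unfold phaseSum
  fun_prop

lemma phaseSum_mem_closure [Finite ι₁] [Fintype ι₂] {N₂ M₂ : Seminorm ℝ (ι₂ → ℝ)}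
    {J₁ : (ι₁ → ℝ) →ₗ[ℝ] (ι → ℝ)} {J₂ : (ι₂ → ℝ) →ₗ[ℝ] (ι → ℝ)} {A₁ : Set ((ι₁ → ℝ) × (ι₁ → ℝ))}
    {A : Set ((ι → ℝ) × (ι → ℝ))}
    (h : ∀ s ∈ Ioo (0 : ℝ) 1, ∀ z₁ ∈ A₁, ∃ c : Clock 4, ∀ O₂ : Orbit N₂ M₂,
      Disjoint (range c.time) (range O₂.time) → 0 ∉ range O₂.time →
        phaseSum J₁ J₂ s z₁ (O₂.posAt 0, O₂.momAt 0) ∈ A)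
    {s : ℝ} (hs : s ∈ Icc (0 : ℝ) 1) {z₁ : (ι₁ → ℝ) × (ι₁ → ℝ)} (hz₁ : z₁ ∈ closure A₁)
    {z₂ : (ι₂ → ℝ) × (ι₂ → ℝ)} (hz₂ : z₂ ∈ closure (motionSet N₂ M₂)) :
    phaseSum J₁ J₂ s z₁ z₂ ∈ closure A := by
  have hinner : ∀ w ∈ Ioo (0 : ℝ) 1 ×ˢ A₁, ∀ z ∈ motionSet N₂ M₂,
      phaseSum J₁ J₂ w.1 w.2 z ∈ closure A := by
    rintro ⟨s, z₁⟩ ⟨hs, hz₁⟩ z hz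
    obtain ⟨c, hc⟩ := h s hs z₁ hz₁
    refine map_mem_closure
      ((continuous_phaseSum J₁ J₂).comp (Continuous.prodMk_right (s, z₁)))
      (mem_closure_posAt_zero_of_disjoint c hz) ?_
    rintro _ ⟨O₂, rfl, h₀, hdisj⟩
    exact hc O₂ hdisj h₀
  have hw : (s, z₁) ∈ closure (Ioo (0 : ℝ) 1 ×ˢ A₁) := by
    rw [closure_prod_eq, closure_Ioo zero_ne_one]
    exact ⟨hs, hz₁⟩
  simpa using map_mem_closure₂ (continuous_phaseSum J₁ J₂) hw hz₂ hinner

variable [Fintype ι₁] [Fintype ι₂] [Fintype ι]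

/-- `ℝ^ι` with the dual norms `N`, `M` is the direct sum of the images of `J₁` and `J₂`; `N` is the
maximum and `M` the sum of the norms on the two summands. -/
structure IsDualSum (N₁ M₁ : Seminorm ℝ (ι₁ → ℝ)) (N₂ M₂ : Seminorm ℝ (ι₂ → ℝ))
    (N M : Seminorm ℝ (ι → ℝ)) (J₁ : (ι₁ → ℝ) →ₗ[ℝ] (ι → ℝ)) (J₂ : (ι₂ → ℝ) →ₗ[ℝ] (ι → ℝ)) :
    Prop where
  left : DualNorms N₁ M₁
  right : DualNorms N₂ M₂
  dotProduct_eq : ∀ x y a b, (J₁ x + J₂ y) ⬝ᵥ (J₁ a + J₂ b) = x ⬝ᵥ a + y ⬝ᵥ b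
  exists_eq : ∀ z, ∃ a b, z = J₁ a + J₂ b
  norm_max : ∀ a b, N (J₁ a + J₂ b) = max (N₁ a) (N₂ b)
  norm_add : ∀ x y, M (J₁ x + J₂ y) = M₁ x + M₂ y

namespace IsDualSum

variable {N₁ M₁ : Seminorm ℝ (ι₁ → ℝ)} {N₂ M₂ : Seminorm ℝ (ι₂ → ℝ)} {N M : Seminorm ℝ (ι → ℝ)}
  {J₁ : (ι₁ → ℝ) →ₗ[ℝ] (ι → ℝ)} {J₂ : (ι₂ → ℝ) →ₗ[ℝ] (ι → ℝ)}

lemma symm (S : IsDualSum N₁ M₁ N₂ M₂ N M J₁ J₂) : IsDualSum N₂ M₂ N₁ M₁ N M J₂ J₁ where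
  left := S.right
  right := S.left
  dotProduct_eq x y a b := by rw [add_comm (J₂ x), add_comm (J₂ a), S.dotProduct_eq, add_comm]
  exists_eq z := by
    obtain ⟨a, b, rfl⟩ := S.exists_eq z
    exact ⟨b, a, add_comm _ _⟩
  norm_max a b := by rw [add_comm, S.norm_max, max_comm]
  norm_add a b := by rw [add_comm, S.norm_add, add_comm]

lemma norm_smul_add_smul (S : IsDualSum N₁ M₁ N₂ M₂ N M J₁ J₂) {s : ℝ} (hs : s ∈ Icc (0 : ℝ) 1)
    (x : ι₁ → ℝ) (y : ι₂ → ℝ) : M (J₁ (s • x) + J₂ ((1 - s) • y)) = s * M₁ x + (1 - s) * M₂ y := by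
  rw [S.norm_add, seminorm_smul_of_nonneg M₁ hs.1, seminorm_smul_of_nonneg M₂ (sub_nonneg.2 hs.2)]

lemma dualNorms (S : IsDualSum N₁ M₁ N₂ M₂ N M J₁ J₂) : DualNorms N M where
  dotProduct_le p q := by
    obtain ⟨x, y, rfl⟩ := S.exists_eq p
    obtain ⟨a, b, rfl⟩ := S.exists_eq q
    rw [S.dotProduct_eq, S.norm_max, S.norm_add, add_mul]
    exact add_le_add
      ((S.left.dotProduct_le x a).trans
        (mul_le_mul_of_nonneg_left (le_max_left _ _) (apply_nonneg M₁ x)))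
      ((S.right.dotProduct_le y b).trans
        (mul_le_mul_of_nonneg_left (le_max_right _ _) (apply_nonneg M₂ y)))
  norming_left q := by
    obtain ⟨a, b, rfl⟩ := S.exists_eq q
    obtain ⟨x, hx, hxa⟩ := S.left.norming_left a
    obtain ⟨y, hy, hyb⟩ := S.right.norming_left b
    rcases le_total (N₁ a) (N₂ b) with h | h
    · exact ⟨J₁ 0 + J₂ y, by rwa [S.norm_add, map_zero, zero_add],
        by rw [S.dotProduct_eq, S.norm_max, zero_dotProduct, zero_add, hyb, max_eq_right h]⟩
    · exact ⟨J₁ x + J₂ 0, by rwa [S.norm_add, map_zero, add_zero],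
        by rw [S.dotProduct_eq, S.norm_max, zero_dotProduct, add_zero, hxa, max_eq_left h]⟩
  norming_right p := by
    obtain ⟨x, y, rfl⟩ := S.exists_eq p
    obtain ⟨a, ha, hxa⟩ := S.left.norming_right x
    obtain ⟨b, hb, hyb⟩ := S.right.norming_right y
    exact ⟨J₁ a + J₂ b, (S.norm_max a b).trans_le (max_le ha hb),
      by rw [S.dotProduct_eq, S.norm_add, hxa, hyb]⟩
  exists_unit := by
    obtain ⟨a, ha⟩ := S.left.exists_unit
    exact ⟨J₁ a + J₂ 0, by rw [S.norm_max, map_zero, ha, max_eq_left zero_le_one]⟩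

lemma isUniqueNorming_momentum (S : IsDualSum N₁ M₁ N₂ M₂ N M J₁ J₂) {s : ℝ}
    (hs : s ∈ Ioo (0 : ℝ) 1) {x v : ι₁ → ℝ} {y w : ι₂ → ℝ} (hx : M₁ x = 1) (hy : M₂ y = 1)
    (hv : IsUniqueNorming N₁ x v) (hw : IsUniqueNorming N₂ y w) :
    IsUniqueNorming N (J₁ (s • x) + J₂ ((1 - s) • y)) (J₁ v + J₂ w) where
  norm_le := (S.norm_max v w).trans_le (max_le hv.norm_le hw.norm_le)
  dotProduct_eq := by
    rw [S.dotProduct_eq, dotProduct_smul, dotProduct_smul, hv.dotProduct_eq, hw.dotProduct_eq,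
      smul_eq_mul, smul_eq_mul, mul_one, mul_one, add_sub_cancel]
  eq_of_dotProduct_eq z hz hdot := by
    obtain ⟨a, b, rfl⟩ := S.exists_eq z
    rw [S.norm_max, max_le_iff] at hz
    rw [S.dotProduct_eq, dotProduct_smul, dotProduct_smul, smul_eq_mul, smul_eq_mul] at hdot
    have ha : a ⬝ᵥ x ≤ 1 := (S.left.symm.dotProduct_le a x).trans (by rw [hx, mul_one]; exact hz.1)
    have hb : b ⬝ᵥ y ≤ 1 := (S.right.symm.dotProduct_le b y).trans (by rw [hy, mul_one]; exact hz.2)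
    have hs' := sub_pos.2 hs.2
    rw [hv.eq_of_dotProduct_eq a hz.1 (le_antisymm ha (by nlinarith [hs.1])),
      hw.eq_of_dotProduct_eq b hz.2 (le_antisymm hb (by nlinarith [hs.1]))]

lemma isUniqueNorming_coordinate (S : IsDualSum N₁ M₁ N₂ M₂ N M J₁ J₂) {a u : ι₁ → ℝ} {b : ι₂ → ℝ}
    (ha : N₁ a = 1) (hb : N₂ b < 1) (hu : IsUniqueNorming M₁ a u) :
    IsUniqueNorming M (J₁ a + J₂ b) (J₁ u) where
  norm_le := by simpa using (S.norm_add u 0).trans_le (by simpa using hu.norm_le)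
  dotProduct_eq := by simpa [hu.dotProduct_eq] using S.dotProduct_eq u 0 a b
  eq_of_dotProduct_eq z hz hdot := by
    obtain ⟨x, y, rfl⟩ := S.exists_eq z
    rw [S.norm_add] at hz
    rw [S.dotProduct_eq] at hdot
    have hx := S.left.dotProduct_le x a
    have hy := S.right.dotProduct_le y b
    rw [ha, mul_one] at hx
    have hy_norm : M₂ y = 0 := by nlinarith [apply_nonneg M₂ y]
    obtain rfl := S.right.symm.eq_zero hy_norm
    rw [zero_dotProduct, add_zero] at hdot
    rw [hu.eq_of_dotProduct_eq x (by linarith) hdot, map_zero, add_zero]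

lemma isLeg_motion (S : IsDualSum N₁ M₁ N₂ M₂ N M J₁ J₂) {s τ : ℝ} (hs : s ∈ Ioo (0 : ℝ) 1)
    {x a a' : ι₁ → ℝ} {y b b' : ι₂ → ℝ} (h₁ : IsLeg N₁ M₁ x a a' τ) (h₂ : IsLeg N₂ M₂ y b b' τ) :
    IsLeg N M (J₁ (s • x) + J₂ ((1 - s) • y)) (J₁ a + J₂ b) (J₁ a' + J₂ b') τ where
  norm_eq := by
    rw [S.norm_smul_add_smul (Ioo_subset_Icc_self hs), h₁.norm_eq, h₂.norm_eq, mul_one, mul_one,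
      add_sub_cancel]
  exists_normal := by
    obtain ⟨v, hv, rfl⟩ := h₁.exists_normal
    obtain ⟨w, hw, rfl⟩ := h₂.exists_normal
    refine ⟨_, S.isUniqueNorming_momentum hs h₁.norm_eq h₂.norm_eq hv hw, ?_⟩
    simp only [map_add, map_smul]
    module
  norm_lt := by
    rintro _ ⟨c, d, hc, hd, hcd, rfl⟩
    have hJ : c • (J₁ a + J₂ b) + d • (J₁ a' + J₂ b') =
        J₁ (c • a + d • a') + J₂ (c • b + d • b') := by
      simp only [map_add, map_smul]
      module
    rw [hJ, S.norm_max]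
    exact max_lt (h₁.norm_lt _ ⟨c, d, hc, hd, hcd, rfl⟩) (h₂.norm_lt _ ⟨c, d, hc, hd, hcd, rfl⟩)

lemma isLeg_reflection (S : IsDualSum N₁ M₁ N₂ M₂ N M J₁ J₂) {s τ : ℝ} (hs : s ∈ Ioo (0 : ℝ) 1)
    {a x x' : ι₁ → ℝ} {b y : ι₂ → ℝ} (h : IsLeg M₁ N₁ a x x' τ) (hb : N₂ b < 1) (hy : M₂ y = 1) :
    IsLeg M N (J₁ a + J₂ b) (J₁ (s • x) + J₂ ((1 - s) • y)) (J₁ (s • x') + J₂ ((1 - s) • y))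
      (s * τ) where
  norm_eq := by rw [S.norm_max, h.norm_eq, max_eq_left hb.le]
  exists_normal := by
    obtain ⟨u, hu, rfl⟩ := h.exists_normal
    refine ⟨_, S.isUniqueNorming_coordinate h.norm_eq hb hu, ?_⟩
    simp only [map_add, map_smul]
    module
  norm_lt := by
    rintro _ ⟨c, d, hc, hd, hcd, rfl⟩
    have hJ : c • (J₁ (s • x) + J₂ ((1 - s) • y)) + d • (J₁ (s • x') + J₂ ((1 - s) • y)) =
        J₁ (s • (c • x + d • x')) + J₂ ((1 - s) • y) := by
      obtain rfl := eq_sub_of_add_eq hcd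
      simp only [map_add, map_smul]
      module
    rw [hJ, S.norm_smul_add_smul (Ioo_subset_Icc_self hs), hy]
    nlinarith [h.norm_lt _ ⟨c, d, hc, hd, hcd, rfl⟩, hs.1]

lemma isLeg_reflection_left (S : IsDualSum N₁ M₁ N₂ M₂ N M J₁ J₂) {s : ℝ} (hs : s ∈ Ioo (0 : ℝ) 1)
    (O₁ : Orbit N₁ M₁) (O₂ : Orbit N₂ M₂) {r t : ℝ} (hrt : r < t) (hr₁ : r ∈ range O₁.time)
    (h₁ : Disjoint (range O₁.time) (Ioo r t)) (hr₂ : r ∉ range O₂.time)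
    (h₂ : Disjoint (range O₂.time) (Ioo r t)) :
    ∃ lam > 0, IsLeg M N (J₁ (O₁.posAt r) + J₂ (O₂.posAt r))
      (J₁ (s • O₁.momAt r) + J₂ ((1 - s) • O₂.momAt r))
      (J₁ (s • O₁.momAt t) + J₂ ((1 - s) • O₂.momAt t)) (-lam) := by
  obtain ⟨i, rfl⟩ := hr₁
  obtain ⟨lam, hlam, hleg⟩ := O₁.reflection i
  refine ⟨s * lam, mul_pos hs.1 hlam, ?_⟩
  rw [O₁.momAt_eq_p_of_disjoint hrt h₁, O₂.momAt_eq_momAt_of_notMem hrt hr₂ h₂, O₁.momAt_time,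
    O₁.posAt_time, ← mul_neg]
  exact S.isLeg_reflection hs hleg (O₂.norm_posAt_lt hr₂) (O₂.norm_momAt t)

/-- Two trajectories running simultaneously in the summands, with the weights `s` and `1 - s` on
their momenta and with bounces at distinct times; each bounce is a bounce of one of them. -/
noncomputable def merge (S : IsDualSum N₁ M₁ N₂ M₂ N M J₁ J₂) {s : ℝ} (hs : s ∈ Ioo (0 : ℝ) 1)
    (O₁ : Orbit N₁ M₁) (O₂ : Orbit N₂ M₂) (hdisj : Disjoint (range O₁.time) (range O₂.time))
    (c : Clock 4) (hc : range c.time = range O₁.time ∪ range O₂.time) : Orbit N M where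
  toClock := c
  q i := J₁ (O₁.posAt (c.time i)) + J₂ (O₂.posAt (c.time i))
  p i := J₁ (s • O₁.momAt (c.time i)) + J₂ ((1 - s) • O₂.momAt (c.time i))
  q_periodic i := by
    simp only [c.time_add, O₁.posAt_periodic _, O₂.posAt_periodic _]
  p_periodic i := by
    simp only [c.time_add, O₁.momAt_periodic _, O₂.momAt_periodic _]
  motion i := by
    have h := hc ▸ c.disjoint_range_Ioo i
    rw [disjoint_union_left] at h
    have hlt := c.strictMono (lt_add_one i)
    exact S.isLeg_motion hs (O₁.isLeg_posAt hlt h.1) (O₂.isLeg_posAt hlt h.2)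
  reflection i := by
    have h := hc ▸ c.disjoint_range_Ioo i
    rw [disjoint_union_left] at h
    have hlt := c.strictMono (lt_add_one i)
    rcases hc ▸ mem_range_self (f := c.time) i with hi | hi
    · exact S.isLeg_reflection_left hs O₁ O₂ hlt hi h.1 (disjoint_left.1 hdisj hi) h.2
    · have hs' : 1 - s ∈ Ioo (0 : ℝ) 1 := ⟨sub_pos.2 hs.2, sub_lt_self 1 hs.1⟩
      simpa only [sub_sub_cancel, add_comm (J₂ _)] using
        S.symm.isLeg_reflection_left hs' O₂ O₁ hlt hi h.2 (disjoint_right.1 hdisj hi) h.1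

lemma phaseSum_mem_motionSet (S : IsDualSum N₁ M₁ N₂ M₂ N M J₁ J₂) {s : ℝ}
    (hs : s ∈ Ioo (0 : ℝ) 1) (O₁ : Orbit N₁ M₁) (O₂ : Orbit N₂ M₂)
    (hdisj : Disjoint (range O₁.time) (range O₂.time)) {t : ℝ} (ht₁ : t ∉ range O₁.time)
    (ht₂ : t ∉ range O₂.time) :
    phaseSum J₁ J₂ s (O₁.posAt t, O₁.momAt t) (O₂.posAt t, O₂.momAt t) ∈ motionSet N M := by
  obtain ⟨c, hc⟩ := Clock.exists_range_time_eq_union O₁.toClock O₂.toClock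
  have ht : t ∉ range c.time := hc ▸ not_or.2 ⟨ht₁, ht₂⟩
  have hlt := c.strictMono (lt_add_one (c.idx t))
  have htime := c.mem_Ioo_time_idx ht
  have hfree := hc ▸ c.disjoint_range_Ioo (c.idx t)
  rw [disjoint_union_left] at hfree
  have hIoo := Ioo_subset_Ioo_left (b := c.time (c.idx t + 1)) htime.1.le
  refine ⟨S.merge hs O₁ O₂ hdisj c hc, c.idx t, ?_, ?_⟩
  · rw [← openSegment_eq_Ioo hlt] at htime
    obtain ⟨a, b, ha, hb, hab, h⟩ := htime
    have hpos₁ := O₁.posAt_convexCombination hlt.le hfree.1 ha.le hb.le hab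
    have hpos₂ := O₂.posAt_convexCombination hlt.le hfree.2 ha.le hb.le hab
    rw [← smul_eq_mul, ← smul_eq_mul, h] at hpos₁ hpos₂
    refine ⟨a, b, ha, hb, hab, ?_⟩
    simp only [phaseSum, merge, hpos₁, hpos₂, map_add, map_smul]
    module
  · rw [phaseSum, O₁.momAt_eq_momAt_of_notMem htime.2 ht₁ (hfree.1.mono_right hIoo),
      O₂.momAt_eq_momAt_of_notMem htime.2 ht₂ (hfree.2.mono_right hIoo)]
    rfl

lemma phaseSum_mem_reflectionSet (S : IsDualSum N₁ M₁ N₂ M₂ N M J₁ J₂) {s : ℝ}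
    (hs : s ∈ Ioo (0 : ℝ) 1) (O₁ : Orbit N₁ M₁) (O₂ : Orbit N₂ M₂)
    (hdisj : Disjoint (range O₁.time) (range O₂.time)) (i : ℤ) {y : ι₁ → ℝ}
    (hy : y ∈ openSegment ℝ (O₁.p i) (O₁.p (i + 1))) :
    phaseSum J₁ J₂ s (O₁.q i, y) (O₂.posAt (O₁.time i), O₂.momAt (O₁.time i)) ∈
      reflectionSet N M := by
  obtain ⟨c, hc⟩ := Clock.exists_range_time_eq_union O₁.toClock O₂.toClock
  obtain ⟨j, hj⟩ : O₁.time i ∈ range c.time := hc ▸ .inl (mem_range_self i)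
  have hlt := c.strictMono (lt_add_one j)
  have hfree := hc ▸ c.disjoint_range_Ioo j
  rw [disjoint_union_left, hj] at hfree
  rw [hj] at hlt
  have hmom₁ := O₁.momAt_eq_p_of_disjoint hlt hfree.1
  have hmom₂ := O₂.momAt_eq_momAt_of_notMem hlt (disjoint_left.1 hdisj (mem_range_self i)) hfree.2
  refine ⟨S.merge hs O₁ O₂ hdisj c hc, j, ?_, ?_⟩
  · simp only [phaseSum, merge, hj, O₁.posAt_time]
  · obtain ⟨a, b, ha, hb, hab, rfl⟩ := hy
    refine ⟨a, b, ha, hb, hab, ?_⟩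
    simp only [phaseSum, merge, hj, O₁.momAt_time, hmom₁, hmom₂]
    obtain rfl := eq_sub_of_add_eq hab
    simp only [map_add, map_smul]
    module

lemma motion_phaseSum_mem_closure (S : IsDualSum N₁ M₁ N₂ M₂ N M J₁ J₂) {s : ℝ}
    (hs : s ∈ Icc (0 : ℝ) 1) {z₁ : (ι₁ → ℝ) × (ι₁ → ℝ)} (hz₁ : z₁ ∈ closure (motionSet N₁ M₁))
    {z₂ : (ι₂ → ℝ) × (ι₂ → ℝ)} (hz₂ : z₂ ∈ closure (motionSet N₂ M₂)) :
    phaseSum J₁ J₂ s z₁ z₂ ∈ closure (motionSet N M) := by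
  refine phaseSum_mem_closure (fun s hs z hz => ?_) hs hz₁ hz₂
  obtain ⟨O₁, h₁, rfl⟩ := exists_posAt_zero_of_mem_motionSet hz
  exact ⟨O₁.toClock, fun O₂ hdisj h₂ => S.phaseSum_mem_motionSet hs O₁ O₂ hdisj h₁ h₂⟩

lemma reflection_phaseSum_mem_closure (S : IsDualSum N₁ M₁ N₂ M₂ N M J₁ J₂) {s : ℝ}
    (hs : s ∈ Icc (0 : ℝ) 1) {z₁ : (ι₁ → ℝ) × (ι₁ → ℝ)}
    (hz₁ : z₁ ∈ closure (reflectionSet N₁ M₁)) {z₂ : (ι₂ → ℝ) × (ι₂ → ℝ)}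
    (hz₂ : z₂ ∈ closure (motionSet N₂ M₂)) :
    phaseSum J₁ J₂ s z₁ z₂ ∈ closure (reflectionSet N M) := by
  refine phaseSum_mem_closure (fun s hs z hz => ?_) hs hz₁ hz₂
  obtain ⟨z, y⟩ := z
  obtain ⟨O₁, i, h₀, rfl, hy⟩ := exists_time_eq_zero_of_mem_reflectionSet hz
  refine ⟨O₁.toClock, fun O₂ hdisj _ => ?_⟩
  simpa only [h₀] using S.phaseSum_mem_reflectionSet hs O₁ O₂ hdisj i hy

lemma mem_closure_reflectionSet_left (S : IsDualSum N₁ M₁ N₂ M₂ N M J₁ J₂)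
    (h₁ : DenseOrbits N₁ M₁) (h₂ : DenseOrbits N₂ M₂) {a x : ι₁ → ℝ} {b y : ι₂ → ℝ}
    (ha : N₁ a = 1) (hb : N₂ b ≤ 1) (hxy : M₁ x + M₂ y ≤ 1) :
    (J₁ a + J₂ b, J₁ x + J₂ y) ∈ closure (reflectionSet N M) := by
  obtain ⟨x', hx', hx⟩ := S.left.symm.exists_smul_eq (le_sub_iff_add_le.2 hxy)
  obtain ⟨y', hy', hy⟩ := S.right.symm.exists_unit_smul_eq y
  have hs : 1 - M₂ y ∈ Icc (0 : ℝ) 1 :=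
    ⟨sub_nonneg.2 (le_of_add_le_of_nonneg_right hxy (apply_nonneg M₁ x)),
      sub_le_self 1 (apply_nonneg M₂ y)⟩
  simpa only [phaseSum, sub_sub_cancel, ← hx, ← hy] using
    S.reflection_phaseSum_mem_closure hs (h₁.reflection a x' ha hx') (h₂.motion b y' hb hy')

lemma denseOrbits (S : IsDualSum N₁ M₁ N₂ M₂ N M J₁ J₂) (h₁ : DenseOrbits N₁ M₁)
    (h₂ : DenseOrbits N₂ M₂) : DenseOrbits N M where
  motion q p hq hp := by
    obtain ⟨a, b, rfl⟩ := S.exists_eq q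
    obtain ⟨x, y, rfl⟩ := S.exists_eq p
    rw [S.norm_max, max_le_iff] at hq
    rw [S.norm_add] at hp
    obtain ⟨x', hx', hx⟩ := S.left.symm.exists_unit_smul_eq x
    obtain ⟨y', hy', hy⟩ := S.right.symm.exists_unit_smul_eq y
    have hs : M₁ x ∈ Icc (0 : ℝ) 1 :=
      ⟨apply_nonneg M₁ x, hp ▸ le_add_of_nonneg_right (apply_nonneg M₂ y)⟩
    simpa only [phaseSum, ← eq_sub_of_add_eq' hp, ← hx, ← hy] using
      S.motion_phaseSum_mem_closure hs (h₁.motion a x' hq.1 hx') (h₂.motion b y' hq.2 hy')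
  reflection q p hq hp := by
    obtain ⟨a, b, rfl⟩ := S.exists_eq q
    obtain ⟨x, y, rfl⟩ := S.exists_eq p
    rw [S.norm_max] at hq
    rw [S.norm_add] at hp
    rcases max_choice (N₁ a) (N₂ b) with hmax | hmax
    · exact S.mem_closure_reflectionSet_left h₁ h₂ (hmax ▸ hq) (hq ▸ le_max_right _ _) hp
    · rw [add_comm (J₁ a), add_comm (J₁ x)]
      rw [add_comm] at hp
      exact S.symm.mem_closure_reflectionSet_left h₂ h₁ (hmax ▸ hq) (hq ▸ le_max_left _ _) hp

end IsDualSum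

end Sums

section Segment

/-- The absolute value of the only coordinate, as a seminorm on `ℝ¹`. -/
noncomputable def absNorm : Seminorm ℝ (Fin 1 → ℝ) := (normSeminorm ℝ ℝ).comp (LinearMap.proj 0)

lemma absNorm_apply (x : Fin 1 → ℝ) : absNorm x = |x 0| := rfl

lemma dualNorms_absNorm : DualNorms absNorm absNorm := by
  have hnorming (q : Fin 1 → ℝ) : ∃ p : Fin 1 → ℝ, absNorm p ≤ 1 ∧ p ⬝ᵥ q = absNorm q := by
    rcases le_total 0 (q 0) with h | h
    · exact ⟨1, by simp [absNorm_apply], by simp [dotProduct, absNorm_apply, abs_of_nonneg h]⟩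
    · exact ⟨-1, by simp [absNorm_apply], by simp [dotProduct, absNorm_apply, abs_of_nonpos h]⟩
  exact {
    dotProduct_le p q := by
      simpa [dotProduct, absNorm_apply, ← abs_mul] using le_abs_self (p 0 * q 0)
    norming_left := hnorming
    norming_right p := by simpa only [dotProduct_comm] using hnorming p
    exists_unit := ⟨1, by simp [absNorm_apply]⟩ }

lemma mul_self_eq_one_of_absNorm_eq_one {x : Fin 1 → ℝ} (hx : absNorm x = 1) :
    x 0 * x 0 = 1 := by
  rw [← abs_mul_abs_self, ← absNorm_apply, hx, mul_one]

lemma isUniqueNorming_absNorm {x : Fin 1 → ℝ} (hx : absNorm x = 1) :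
    IsUniqueNorming absNorm x x := by
  have hsq := mul_self_eq_one_of_absNorm_eq_one hx
  refine ⟨hx.le, by simpa [dotProduct] using hsq, fun v _ hv => ?_⟩
  have hv : v 0 * x 0 = 1 := by simpa [dotProduct] using hv
  ext i
  rw [Subsingleton.elim i 0]
  linear_combination (-v 0) * hsq + x 0 * hv

lemma isLeg_absNorm {x : Fin 1 → ℝ} (hx : absNorm x = 1) :
    IsLeg absNorm absNorm (-x) x (-x) 2 where
  norm_eq := (map_neg_eq_map absNorm x).trans hx
  exists_normal := ⟨-x, (isUniqueNorming_absNorm hx).neg, by module⟩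
  norm_lt := by
    rintro _ ⟨a, b, ha, hb, hab, rfl⟩
    have hmid : a • x + b • -x = (a - b) • x := by module
    rw [hmid, map_smul_eq_mul, hx, mul_one, Real.norm_eq_abs, abs_lt]
    constructor <;> linarith

/-- The trajectory bouncing between `x` and `-x`. -/
noncomputable def segmentOrbit (x : Fin 1 → ℝ) (hx : absNorm x = 1) : Orbit absNorm absNorm :=
  have hnorm (i : ℤ) : absNorm ((-1 : ℝ) ^ i • x) = 1 := by
    rw [map_smul_eq_mul, hx, norm_zpow, norm_neg, norm_one, one_zpow, one_mul]
  have hsucc (i : ℤ) : (-1 : ℝ) ^ (i + 1) • x = -((-1 : ℝ) ^ i • x) := by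
    rw [zpow_add_one₀ (by norm_num), mul_neg_one, neg_smul]
  have hperiodic : Function.Periodic (fun i : ℤ => (-1 : ℝ) ^ i • x) (2 : ℕ) := fun i => by
    simp [zpow_add₀]
  { m := 2
    m_pos := two_pos
    time := fun i => 2 * i
    strictMono := fun i j hij => by simpa using hij
    time_add := fun i => by push_cast; ring
    q := fun i => (-1 : ℝ) ^ i • x
    p := fun i => (-1 : ℝ) ^ i • x
    q_periodic := hperiodic
    p_periodic := hperiodic
    motion := fun i => by
      have htime : (2 : ℝ) * (i + 1 : ℤ) - 2 * i = 2 := by push_cast; ring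
      rw [hsucc, htime]
      exact isLeg_absNorm (hnorm i)
    reflection := fun i => ⟨2, two_pos, by
      simpa only [hsucc, neg_neg] using (isLeg_absNorm (hnorm i)).neg_momentum⟩ }

lemma mem_closure_reflectionSet_absNorm {q p : Fin 1 → ℝ} (hq : absNorm q = 1)
    (hp : absNorm p ≤ 1) : (q, p) ∈ closure (reflectionSet absNorm absNorm) := by
  have hsq := mul_self_eq_one_of_absNorm_eq_one hq
  have hpq : |p 0 * q 0| ≤ 1 := by
    rwa [abs_mul, ← absNorm_apply, ← absNorm_apply, hq, mul_one]
  rw [abs_le] at hpq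
  have hp : p ∈ closure (openSegment ℝ q (-q)) := by
    rw [closure_openSegment]
    refine ⟨(1 + p 0 * q 0) / 2, (1 - p 0 * q 0) / 2, by linarith, by linarith, by ring, ?_⟩
    ext i
    rw [Subsingleton.elim i 0]
    simp only [Pi.add_apply, Pi.smul_apply, Pi.neg_apply, smul_eq_mul]
    linear_combination p 0 * hsq
  refine map_mem_closure (Continuous.prodMk_right q) hp fun y hy =>
    ⟨segmentOrbit q hq, 0, by simp [segmentOrbit], by simpa [segmentOrbit] using hy⟩

lemma denseOrbits_absNorm : DenseOrbits absNorm absNorm where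
  motion q p hq hp := by
    simpa using swap_mem_closure_motionSet
      (mem_closure_reflectionSet_absNorm ((map_neg_eq_map absNorm p).trans hp) hq)
  reflection _ _ := mem_closure_reflectionSet_absNorm

end Segment

section Append

variable {k l : ℕ}

lemma castAdd_ne_natAdd (i : Fin k) (j : Fin l) : Fin.castAdd l i ≠ Fin.natAdd k j :=
  Fin.ne_of_lt (i.2.trans_le (Nat.le_add_right k j))

lemma splitL_append (x : Fin k → ℝ) (y : Fin l → ℝ) : splitL (Fin.append x y) = x :=
  funext (Fin.append_left x y)

lemma splitR_append (x : Fin k → ℝ) (y : Fin l → ℝ) : splitR (Fin.append x y) = y :=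
  funext (Fin.append_right x y)

lemma append_split (z : Fin (k + l) → ℝ) : Fin.append (splitL z) (splitR z) = z :=
  Fin.append_castAdd_natAdd

/-- The inclusion of `ℝᵏ` as the first `k` coordinates of `ℝ^{k+l}`. -/
noncomputable def inclL : (Fin k → ℝ) →ₗ[ℝ] (Fin (k + l) → ℝ) :=
  Function.ExtendByZero.linearMap ℝ (Fin.castAdd l)

/-- The inclusion of `ℝˡ` as the last `l` coordinates of `ℝ^{k+l}`. -/
noncomputable def inclR : (Fin l → ℝ) →ₗ[ℝ] (Fin (k + l) → ℝ) :=
  Function.ExtendByZero.linearMap ℝ (Fin.natAdd k)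

lemma inclL_add_inclR (x : Fin k → ℝ) (y : Fin l → ℝ) : inclL x + inclR y = Fin.append x y := by
  ext i
  refine Fin.addCases (fun i => ?_) (fun j => ?_) i
  · have hi : ¬∃ j, Fin.natAdd k j = Fin.castAdd l i := fun ⟨j, hj⟩ =>
      castAdd_ne_natAdd i j hj.symm
    simp [inclL, inclR, (Fin.castAdd_injective k l).extend_apply, Function.extend_apply' _ _ _ hi]
  · have hj : ¬∃ i, Fin.castAdd l i = Fin.natAdd k j := fun ⟨i, hi⟩ =>
      castAdd_ne_natAdd i j hi
    simp [inclL, inclR, (Fin.natAdd_injective l k).extend_apply, Function.extend_apply' _ _ _ hj]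

/-- The maximum of seminorms of the two blocks of coordinates. -/
noncomputable def maxNorm (N₁ : Seminorm ℝ (Fin k → ℝ)) (N₂ : Seminorm ℝ (Fin l → ℝ)) :
    Seminorm ℝ (Fin (k + l) → ℝ) :=
  N₁.comp (LinearMap.funLeft ℝ ℝ (Fin.castAdd l)) ⊔ N₂.comp (LinearMap.funLeft ℝ ℝ (Fin.natAdd k))

/-- The sum of seminorms of the two blocks of coordinates. -/
noncomputable def addNorm (N₁ : Seminorm ℝ (Fin k → ℝ)) (N₂ : Seminorm ℝ (Fin l → ℝ)) :
    Seminorm ℝ (Fin (k + l) → ℝ) :=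
  N₁.comp (LinearMap.funLeft ℝ ℝ (Fin.castAdd l)) + N₂.comp (LinearMap.funLeft ℝ ℝ (Fin.natAdd k))

variable {N₁ M₁ : Seminorm ℝ (Fin k → ℝ)} {N₂ M₂ : Seminorm ℝ (Fin l → ℝ)}

lemma maxNorm_apply (z : Fin (k + l) → ℝ) :
    maxNorm N₁ N₂ z = max (N₁ (splitL z)) (N₂ (splitR z)) := rfl

lemma addNorm_apply (z : Fin (k + l) → ℝ) :
    addNorm N₁ N₂ z = N₁ (splitL z) + N₂ (splitR z) := rfl

lemma isDualSum_append (h₁ : DualNorms N₁ M₁) (h₂ : DualNorms N₂ M₂) :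
    IsDualSum N₁ M₁ N₂ M₂ (maxNorm N₁ N₂) (addNorm M₁ M₂) inclL inclR where
  left := h₁
  right := h₂
  dotProduct_eq x y a b := by
    rw [inclL_add_inclR, inclL_add_inclR]
    simp [dotProduct, Fin.sum_univ_add]
  exists_eq z := ⟨splitL z, splitR z, by rw [inclL_add_inclR, append_split]⟩
  norm_max a b := by rw [inclL_add_inclR, maxNorm_apply, splitL_append, splitR_append]
  norm_add a b := by rw [inclL_add_inclR, addNorm_apply, splitL_append, splitR_append]

lemma sumInfty_unitBalls :
    sumInfty {x | N₁ x ≤ 1} {y | N₂ y ≤ 1} = {z | maxNorm N₁ N₂ z ≤ 1} :=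
  Set.ext fun z => (max_le_iff (a := N₁ (splitL z))).symm

lemma sumOne_unitBalls (h₁ : DualNorms N₁ M₁) (h₂ : DualNorms N₂ M₂) :
    sumOne {x | N₁ x ≤ 1} {y | N₂ y ≤ 1} = {z | addNorm N₁ N₂ z ≤ 1} := by
  refine Subset.antisymm (convexHull_min ?_ ?_) fun z hz => ?_
  · rintro z (⟨hL, hR⟩ | ⟨hL, hR⟩)
    · simpa [addNorm_apply, hR] using hL
    · simpa [addNorm_apply, hL] using hR
  · simpa using (addNorm N₁ N₂).convexOn.convex_le 1
  · have hz : N₁ (splitL z) + N₂ (splitR z) ≤ 1 := hz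
    obtain ⟨x, hx, hzx⟩ := h₁.exists_smul_eq (le_sub_iff_add_le.2 hz)
    obtain ⟨y, hy, hzy⟩ := h₂.exists_unit_smul_eq (splitR z)
    have hleft : inclL x + inclR (0 : Fin l → ℝ) ∈ sumOne {x | N₁ x ≤ 1} {y | N₂ y ≤ 1} := by
      refine subset_convexHull ℝ _ (.inl ?_)
      rw [inclL_add_inclR]
      exact ⟨by rwa [splitL_append], splitR_append x 0⟩
    have hright : inclL (0 : Fin k → ℝ) + inclR y ∈ sumOne {x | N₁ x ≤ 1} {y | N₂ y ≤ 1} := by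
      refine subset_convexHull ℝ _ (.inr ?_)
      rw [inclL_add_inclR]
      exact ⟨splitL_append 0 y, by rw [splitR_append]; exact hy.le⟩
    have hcomb : z = (1 - N₂ (splitR z)) • (inclL x + inclR (0 : Fin l → ℝ)) +
        N₂ (splitR z) • (inclL (0 : Fin k → ℝ) + inclR y) := by
      rw [map_zero, map_zero, add_zero, zero_add, ← map_smul, ← map_smul, ← hzx, ← hzy,
        inclL_add_inclR, append_split]
    rw [hcomb]
    exact convex_convexHull ℝ _ hleft hright
      (sub_nonneg.2 (le_of_add_le_of_nonneg_right hz (apply_nonneg N₁ _)))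
      (apply_nonneg N₂ _) (sub_add_cancel 1 _)

end Append

lemma IsHanner.exists_denseOrbits {n : ℕ} {H : Set (Fin n → ℝ)} (hH : IsHanner n H) :
    ∃ N M : Seminorm ℝ (Fin n → ℝ), DualNorms N M ∧ DenseOrbits N M ∧ H = {q | N q ≤ 1} := by
  induction hH with
  | segment => exact ⟨absNorm, absNorm, dualNorms_absNorm, denseOrbits_absNorm, rfl⟩
  | inftySum _ _ ih₁ ih₂ =>
    obtain ⟨N₁, M₁, h₁, hd₁, rfl⟩ := ih₁
    obtain ⟨N₂, M₂, h₂, hd₂, rfl⟩ := ih₂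
    have S := isDualSum_append h₁ h₂
    exact ⟨maxNorm N₁ N₂, addNorm M₁ M₂, S.dualNorms, S.denseOrbits hd₁ hd₂, sumInfty_unitBalls⟩
  | oneSum _ _ ih₁ ih₂ =>
    obtain ⟨N₁, M₁, h₁, hd₁, rfl⟩ := ih₁
    obtain ⟨N₂, M₂, h₂, hd₂, rfl⟩ := ih₂
    have S := isDualSum_append h₁.symm h₂.symm
    exact ⟨addNorm N₁ N₂, maxNorm M₁ M₂, S.dualNorms.symm, (S.denseOrbits hd₁.dual hd₂.dual).dual,
      sumOne_unitBalls h₁ h₂⟩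

lemma DenseOrbits.mem_closure {n : ℕ} {N M : Seminorm ℝ (Fin n → ℝ)} (h : DenseOrbits N M)
    {z : (Fin n → ℝ) × (Fin n → ℝ)} (hz : z ∈ frontier ({q | N q ≤ 1} ×ˢ {p | M p ≤ 1})) :
    z ∈ closure (motionSet N M ∪ reflectionSet N M) := by
  have hclosedN : IsClosed {q | N q ≤ 1} := isClosed_le (seminorm_continuous N) continuous_const
  have hclosedM : IsClosed {p | M p ≤ 1} := isClosed_le (seminorm_continuous M) continuous_const
  rw [frontier_prod_eq, hclosedN.closure_eq, hclosedM.closure_eq] at hz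
  rw [closure_union]
  rcases hz with ⟨hq, hp⟩ | ⟨hq, hp⟩
  · exact .inl (h.motion _ _ hq ((mem_frontier_unitBall_iff M).1 hp))
  · exact .inr (h.reflection _ _ ((mem_frontier_unitBall_iff N).1 hq) hp)

end Billiard

open Billiard in
/-- For a Hanner polytope `H ⊂ ℝⁿ`, in an arbitrarily small neighborhood of any point of
`∂(H × H°)` there passes a closed classical billiard trajectory of the minimal length 4
in the configuration `H × H°`. -/
theorem hanner_minimal_trajectories_dense (n : ℕ) (H : Set (Fin n → ℝ))
    (hH : IsHanner n H) :
    ∀ z ∈ frontier (H ×ˢ polarSet H), ∀ ε : ℝ, 0 < ε →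
      ∃ τ : ClassicalTraj n H (polarSet H), τ.length = 4 ∧
        ∃ w ∈ τ.trace, dist z w < ε := by
  intro z hz ε hε
  obtain ⟨N, M, hNM, hdense, rfl⟩ := hH.exists_denseOrbits
  rw [hNM.polarSet_unitBall] at hz ⊢
  obtain ⟨w, hw, hzw⟩ := Metric.mem_closure_iff.1 (hdense.mem_closure hz) ε hε
  obtain ⟨τ, hτ, hwτ⟩ := exists_classicalTraj_of_mem hNM hw
  exact ⟨τ, hτ, w, hwτ, hzw⟩
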